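/- For any N pairwise distinct points x_1, …, x_N in ℝ^d and any constant c > 0, the N × N interpolation matrix A with entries A_{ij} = √((‖x_i − x_j‖/c)² + 1) arising from the multiquadric radial basis function is invertible (its determinant is nonzero). Consequently, the multiquadric RBF interpolation problem of Equation (4) has a unique solution for every data vector. -/

import Mathlib

/-!
The Gaussian matrix `exp (-t ‖xᵢ - xⱼ‖²)` is a Gram matrix: up to a positive factor its entries are
the `L²` inner products of Gaussians centred at the `xᵢ`. These translates are linearly independent,
because they differ from the characters `v ↦ exp (4t ⟪xᵢ, v⟫)` by nowhere vanishing factors, so the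
matrix is positive definite. Integrating in `t` (Laplace transform), the matrices `(r + sᵢⱼ)⁻¹`
with `sᵢⱼ = (‖xᵢ - xⱼ‖ / c)² + 1` are positive definite for all `r > 0`. Since
`sᵖ = C⁻¹ ∫ rᵖ (r⁻¹ - (r + s)⁻¹) dr` for `0 < p < 1`, and the constant matrices `r⁻¹` vanish on
vectors of coordinate sum zero, the form of `sᵢⱼᵖ` is negative definite on that hyperplane. As its
diagonal is positive, the form has no kernel.
-/

open Matrix MeasureTheory Set
open scoped InnerProductSpace

section StrictCondNegDef

variable {ι K : Type*} [Fintype ι]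

/-- Strict conditional negative definiteness: the matrix is symmetric and its quadratic form is
negative on the nonzero vectors whose coordinates sum to zero. -/
structure IsStrictCondNegDef [Ring K] [PartialOrder K] (A : Matrix ι ι K) : Prop where
  isSymm : A.IsSymm
  dotProduct_mulVec_neg : ∀ w : ι → K, w ≠ 0 → ∑ i, w i = 0 → w ⬝ᵥ A *ᵥ w < 0

theorem IsStrictCondNegDef.det_ne_zero [Field K] [PartialOrder K] [DecidableEq ι]
    {A : Matrix ι ι K} (hA : IsStrictCondNegDef A) (hdiag : ∀ i, 0 < A i i) : A.det ≠ 0 := by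
  intro hdet
  obtain ⟨l, hl, hAl⟩ := exists_mulVec_eq_zero_iff.2 hdet
  obtain ⟨k, -⟩ := Function.ne_iff.1 hl
  have hlA : l ᵥ* A = 0 := by rw [← mulVec_transpose, hA.isSymm, hAl]
  have hsum : ∑ i, l i ≠ 0 := fun hsum => by
    simpa [hAl] using hA.dotProduct_mulVec_neg l hl hsum
  -- Moving along the kernel keeps the value of the form, so `eₖ` can be moved into the hyperplane.
  set w : ι → K := Pi.single k 1 - (∑ i, l i)⁻¹ • l with hw
  have hw_sum : ∑ i, w i = 0 := by
    simp [hw, Finset.sum_sub_distrib, ← Finset.mul_sum, inv_mul_cancel₀ hsum]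
  have hw_form : w ⬝ᵥ A *ᵥ w = A k k := by
    have h_mulVec : A *ᵥ w = A *ᵥ Pi.single k 1 := by simp [hw, mulVec_sub, mulVec_smul, hAl]
    have h_vecMul : w ᵥ* A = Pi.single k 1 ᵥ* A := by simp [hw, sub_vecMul, smul_vecMul, hlA]
    rw [h_mulVec, dotProduct_mulVec, h_vecMul, ← dotProduct_mulVec]
    simp
  have hw_ne : w ≠ 0 := fun h => (hdiag k).ne (by simpa [h] using hw_form)
  exact lt_asymm (hdiag k) (hw_form ▸ hA.dotProduct_mulVec_neg w hw_ne hw_sum)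

end StrictCondNegDef

section Integral

variable {α ι : Type*} [MeasurableSpace α] {μ : Measure α} [Fintype ι] {M : α → Matrix ι ι ℝ}

theorem integrable_dotProduct_mulVec (hM : ∀ i j, Integrable (fun a => M a i j) μ) (v w : ι → ℝ) :
    Integrable (fun a => v ⬝ᵥ M a *ᵥ w) μ :=
  integrable_finsetSum _ fun i _ => .const_mul
    (integrable_finsetSum _ fun j _ => (hM i j).mul_const _) _

theorem dotProduct_integral_mulVec (hM : ∀ i j, Integrable (fun a => M a i j) μ) (v w : ι → ℝ) :
    v ⬝ᵥ (of fun i j => ∫ a, M a i j ∂μ) *ᵥ w = ∫ a, v ⬝ᵥ M a *ᵥ w ∂μ := by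
  have hrow (i : ι) : Integrable (fun a => ∑ j, M a i j * w j) μ :=
    integrable_finsetSum _ fun j _ => (hM i j).mul_const _
  simp only [dotProduct, mulVec, of_apply]
  rw [integral_finsetSum _ fun i _ => (hrow i).const_mul _]
  refine Finset.sum_congr rfl fun i _ => ?_
  rw [integral_const_mul, integral_finsetSum _ fun j _ => (hM i j).mul_const _]
  simp only [integral_mul_const]

theorem setIntegral_pos_of_pos {s : Set α} {f : α → ℝ} (hs : MeasurableSet s) (hμs : μ s ≠ 0)
    (hf : IntegrableOn f s μ) (hpos : ∀ a ∈ s, 0 < f a) : 0 < ∫ a in s, f a ∂μ := by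
  rw [setIntegral_pos_iff_support_of_nonneg_ae
    (ae_restrict_of_forall_mem hs fun a ha => (hpos a ha).le) hf]
  have h_support : s ⊆ Function.support f := fun a ha => (hpos a ha).ne'
  rw [inter_eq_right.2 h_support]
  exact pos_iff_ne_zero.2 hμs

theorem dotProduct_setIntegral_mulVec_pos {s : Set α} (hs : MeasurableSet s) (hμs : μ s ≠ 0)
    (hM : ∀ i j, IntegrableOn (fun a => M a i j) s μ) {w : ι → ℝ}
    (hpos : ∀ a ∈ s, 0 < w ⬝ᵥ M a *ᵥ w) :
    0 < w ⬝ᵥ (of fun i j => ∫ a in s, M a i j ∂μ) *ᵥ w := by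
  rw [dotProduct_integral_mulVec hM]
  exact setIntegral_pos_of_pos hs hμs (integrable_dotProduct_mulVec hM w w) hpos

end Integral

section Schoenberg

variable {ι : Type*} {S : Matrix ι ι ℝ}

theorem isSymm_of_posDef_exp_neg (hS : (S.map fun s => Real.exp (-s)).PosDef) : S.IsSymm :=
  IsSymm.ext fun i j => neg_injective (Real.exp_injective (hS.isHermitian.apply i j))

theorem integral_Ioi_exp_neg_mul {a : ℝ} (ha : 0 < a) :
    ∫ t in Ioi 0, Real.exp (-a * t) = a⁻¹ := by
  simpa [neg_div_neg_eq] using integral_exp_mul_Ioi (neg_neg_of_pos ha) 0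

theorem posDef_inv_add_of_posDef_exp_neg_mul [Finite ι] (hS_nonneg : ∀ i j, 0 ≤ S i j)
    (hS : ∀ t > 0, (S.map fun s => Real.exp (-(t * s))).PosDef) {r : ℝ} (hr : 0 < r) :
    (S.map fun s => (r + s)⁻¹).PosDef := by
  have := Fintype.ofFinite ι
  have hS_symm : S.IsSymm := isSymm_of_posDef_exp_neg (by simpa using hS 1 one_pos)
  have hrS_pos (i j : ι) : 0 < r + S i j := add_pos_of_pos_of_nonneg hr (hS_nonneg i j)
  have h_laplace : (S.map fun s => (r + s)⁻¹)
      = of fun i j => ∫ t in Ioi 0, (S.map fun s => Real.exp (-(r + s) * t)) i j := by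
    ext i j
    exact (integral_Ioi_exp_neg_mul (hrS_pos i j)).symm
  refine .of_dotProduct_mulVec_pos (isHermitian_iff_isSymm.2 (hS_symm.map _)) fun w hw => ?_
  rw [h_laplace, star_trivial]
  refine dotProduct_setIntegral_mulVec_pos
    (M := fun t => S.map fun s => Real.exp (-(r + s) * t)) measurableSet_Ioi (by simp)
    (fun i j => exp_neg_integrableOn_Ioi 0 (hrS_pos i j)) fun t ht => ?_
  have h_factor : (S.map fun s => Real.exp (-(r + s) * t))
      = Real.exp (-(r * t)) • S.map fun s => Real.exp (-(t * s)) := by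
    ext i j
    simp only [map_apply, Matrix.smul_apply, smul_eq_mul, ← Real.exp_add]
    ring_nf
  rw [h_factor]
  exact ((hS t ht).smul (Real.exp_pos _)).dotProduct_mulVec_pos hw

theorem dotProduct_rpowIntegrand₀₁_mulVec [Fintype ι] {p t : ℝ} {w : ι → ℝ} (hw : ∑ i, w i = 0) :
    w ⬝ᵥ (S.map fun s => p.rpowIntegrand₀₁ t s) *ᵥ w
      = -(t ^ p * (w ⬝ᵥ (S.map fun s => (t + s)⁻¹) *ᵥ w)) := by
  have h_split : (S.map fun s => p.rpowIntegrand₀₁ t s)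
      = t ^ p • (of (fun _ _ => t⁻¹) - S.map fun s => (t + s)⁻¹) := by
    ext i j
    simp [Real.rpowIntegrand₀₁]
  have h_const : (of fun _ _ => t⁻¹ : Matrix ι ι ℝ) *ᵥ w = 0 := by
    ext i
    simp [mulVec, dotProduct, ← Finset.mul_sum, hw]
  simp [h_split, smul_mulVec, sub_mulVec, h_const, dotProduct_smul]

theorem isStrictCondNegDef_rpow_of_posDef_exp_neg_mul [Fintype ι] (hS_nonneg : ∀ i j, 0 ≤ S i j)
    (hS : ∀ t > 0, (S.map fun s => Real.exp (-(t * s))).PosDef) {p : ℝ} (hp : p ∈ Ioo 0 1) :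
    IsStrictCondNegDef (S.map fun s => s ^ p) where
  isSymm := (isSymm_of_posDef_exp_neg (by simpa using hS 1 one_pos)).map _
  dotProduct_mulVec_neg w hw hw_sum := by
    set C := ∫ t in Ioi 0, p.rpowIntegrand₀₁ t 1
    have hC : 0 < C := Real.integral_rpowIntegrand₀₁_one_pos hp
    have h_integral : (S.map fun s => s ^ p)
        = -(C⁻¹ • of fun i j => ∫ t in Ioi 0, (-S.map fun s => p.rpowIntegrand₀₁ t s) i j) := by
      ext i j
      simpa [integral_neg] using Real.rpow_eq_const_mul_integral hp (hS_nonneg i j)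
    rw [h_integral, neg_mulVec, dotProduct_neg, smul_mulVec, dotProduct_smul, neg_lt_zero]
    refine smul_pos (inv_pos.2 hC) (dotProduct_setIntegral_mulVec_pos
      (M := fun t => -S.map fun s => p.rpowIntegrand₀₁ t s) measurableSet_Ioi (by simp)
      (fun i j => (Real.integrableOn_rpowIntegrand₀₁_Ioi hp (hS_nonneg i j)).neg) fun t ht => ?_)
    rw [neg_mulVec, dotProduct_neg, dotProduct_rpowIntegrand₀₁_mulVec hw_sum, neg_neg]
    exact mul_pos (Real.rpow_pos_of_pos ht p)
      ((posDef_inv_add_of_posDef_exp_neg_mul hS_nonneg hS ht).dotProduct_mulVec_pos hw)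

end Schoenberg

section Gaussian

variable {ι V : Type*} [NormedAddCommGroup V] [InnerProductSpace ℝ V] {x : ι → V}

theorem linearIndependent_exp_inner (hx : Function.Injective x) :
    LinearIndependent ℝ (fun i v => Real.exp ⟪x i, v⟫_ℝ) := by
  let χ (i : ι) : Multiplicative V →* ℝ :=
    Real.expMonoidHom.comp (innerₗ V (x i)).toAddMonoidHom.toMultiplicative
  have hχ : Function.Injective χ := fun i j hij => hx <| ext_inner_right ℝ fun v =>
    Real.exp_injective (DFunLike.congr_fun hij (Multiplicative.ofAdd v))
  exact (linearIndependent_monoidHom (Multiplicative V) ℝ).comp χ hχ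

theorem linearIndependent_exp_neg_mul_sq_norm_sub {b : ℝ} (hb : b ≠ 0)
    (hx : Function.Injective x) :
    LinearIndependent ℝ (fun i v => Real.exp (-b * ‖v - x i‖ ^ 2)) := by
  have h_factor (i : ι) (v : V) : Real.exp (-b * ‖v - x i‖ ^ 2) = Real.exp (-b * ‖v‖ ^ 2) *
      (Real.exp (-b * ‖x i‖ ^ 2) * Real.exp ⟪(2 * b) • x i, v⟫_ℝ) := by
    rw [← Real.exp_add, ← Real.exp_add, norm_sub_sq_real, inner_smul_left, real_inner_comm]
    simp only [conj_trivial]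
    ring_nf
  have h_char : LinearIndependent ℝ (fun i v => Real.exp ⟪(2 * b) • x i, v⟫_ℝ) :=
    linearIndependent_exp_inner ((smul_right_injective V (by positivity)).comp hx)
  rw [linearIndependent_iff'] at h_char ⊢
  intro s w hw i hi
  refine (mul_eq_zero.1 (h_char s (fun i => w i * Real.exp (-b * ‖x i‖ ^ 2)) ?_ i hi)).resolve_right
    (Real.exp_ne_zero _)
  ext v
  have hwv := congr_fun hw v
  simp only [Finset.sum_apply, Pi.smul_apply, Pi.zero_apply, smul_eq_mul, h_factor,
    mul_left_comm _ (Real.exp (-b * ‖v‖ ^ 2)), ← Finset.mul_sum] at hwv ⊢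
  simpa only [mul_assoc] using (mul_eq_zero.1 hwv).resolve_left (Real.exp_ne_zero _)

theorem exp_neg_mul_sq_norm_sub_mul_exp_neg_mul_sq_norm_sub (t : ℝ) (x y v : V) :
    Real.exp (-(2 * t) * ‖v - x‖ ^ 2) * Real.exp (-(2 * t) * ‖v - y‖ ^ 2)
      = Real.exp (-t * ‖x - y‖ ^ 2) * Real.exp (-(4 * t) * ‖v - midpoint ℝ x y‖ ^ 2) := by
  have h_apollonius :=
    EuclideanGeometry.dist_sq_add_dist_sq_eq_two_mul_dist_midpoint_sq_add_half_dist_sq v x y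
  simp only [dist_eq_norm] at h_apollonius
  rw [← Real.exp_add, ← Real.exp_add]
  congr 1
  linear_combination -(2 * t) * h_apollonius

section FiniteDimensional

variable [FiniteDimensional ℝ V] [MeasurableSpace V] [BorelSpace V]

theorem integral_exp_neg_mul_sq_norm_pos {b : ℝ} (hb : 0 < b) :
    0 < ∫ v : V, Real.exp (-b * ‖v‖ ^ 2) := by
  rw [GaussianFourier.integral_rexp_neg_mul_sq_norm hb]
  positivity

theorem integrable_exp_neg_mul_sq_norm {b : ℝ} (hb : 0 < b) :
    Integrable (fun v : V => Real.exp (-b * ‖v‖ ^ 2)) :=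
  .of_integral_ne_zero (integral_exp_neg_mul_sq_norm_pos hb).ne'

theorem integrable_exp_neg_mul_sq_norm_sub_mul {t : ℝ} (ht : 0 < t) (x y : V) :
    Integrable fun v => Real.exp (-(2 * t) * ‖v - x‖ ^ 2) * Real.exp (-(2 * t) * ‖v - y‖ ^ 2) := by
  simp only [exp_neg_mul_sq_norm_sub_mul_exp_neg_mul_sq_norm_sub]
  exact ((integrable_exp_neg_mul_sq_norm (by positivity)).comp_sub_right _).const_mul _

theorem integral_exp_neg_mul_sq_norm_sub_mul (t : ℝ) (x y : V) :
    ∫ v, Real.exp (-(2 * t) * ‖v - x‖ ^ 2) * Real.exp (-(2 * t) * ‖v - y‖ ^ 2)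
      = Real.exp (-t * ‖x - y‖ ^ 2) * ∫ v : V, Real.exp (-(4 * t) * ‖v‖ ^ 2) := by
  simp only [exp_neg_mul_sq_norm_sub_mul_exp_neg_mul_sq_norm_sub, integral_const_mul]
  rw [integral_sub_right_eq_self fun v : V => Real.exp (-(4 * t) * ‖v‖ ^ 2)]

theorem posDef_exp_neg_mul_sq_norm_sub_of_finiteDimensional [Finite ι] {t : ℝ} (ht : 0 < t)
    (hx : Function.Injective x) : (of fun i j => Real.exp (-t * ‖x i - x j‖ ^ 2)).PosDef := by
  have := Fintype.ofFinite ι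
  let φ (v : V) (i : ι) : ℝ := Real.exp (-(2 * t) * ‖v - x i‖ ^ 2)
  set C := ∫ v : V, Real.exp (-(4 * t) * ‖v‖ ^ 2)
  have hC : 0 < C := integral_exp_neg_mul_sq_norm_pos (by positivity)
  have h_int (i j : ι) : Integrable fun v => vecMulVec (φ v) (φ v) i j :=
    integrable_exp_neg_mul_sq_norm_sub_mul ht (x i) (x j)
  have h_gram : (of fun i j => Real.exp (-t * ‖x i - x j‖ ^ 2))
      = C⁻¹ • of fun i j => ∫ v, vecMulVec (φ v) (φ v) i j := by
    ext i j
    simp only [φ, vecMulVec_apply, of_apply, Matrix.smul_apply, smul_eq_mul]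
    rw [integral_exp_neg_mul_sq_norm_sub_mul]
    exact (eq_inv_mul_iff_mul_eq₀ hC.ne').2 (mul_comm _ _)
  have h_sq (w : ι → ℝ) (v : V) : w ⬝ᵥ vecMulVec (φ v) (φ v) *ᵥ w = (w ⬝ᵥ φ v) ^ 2 := by
    simp [vecMulVec_mulVec, dotProduct_smul, dotProduct_comm (φ v), sq]
  rw [h_gram]
  refine .smul (.of_dotProduct_mulVec_pos ?_ fun w hw => ?_) (inv_pos.2 hC)
  · ext i j
    simp [vecMulVec_apply, mul_comm]
  · obtain ⟨v, hv⟩ : ∃ v, w ⬝ᵥ φ v ≠ 0 := by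
      by_contra! h
      exact hw <| funext <| Fintype.linearIndependent_iff.1
        (linearIndependent_exp_neg_mul_sq_norm_sub (b := 2 * t) (by positivity) hx) w
        (funext fun v => by simpa [φ, dotProduct] using h v)
    have h_int_sq := integrable_dotProduct_mulVec h_int w w
    rw [star_trivial, dotProduct_integral_mulVec h_int]
    simp only [h_sq] at h_int_sq ⊢
    exact integral_pos_of_integrable_nonneg_nonzero (by fun_prop) h_int_sq
      (fun v => sq_nonneg _) (pow_ne_zero 2 hv)

end FiniteDimensional

theorem posDef_exp_neg_mul_sq_norm_sub [Finite ι] {t : ℝ} (ht : 0 < t)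
    (hx : Function.Injective x) : (of fun i j => Real.exp (-t * ‖x i - x j‖ ^ 2)).PosDef := by
  let W : Submodule ℝ V := Submodule.span ℝ (range x)
  have : FiniteDimensional ℝ W := .span_of_finite ℝ (finite_range x)
  borelize ↥W
  exact posDef_exp_neg_mul_sq_norm_sub_of_finiteDimensional (V := W) ht
    (x := fun i => ⟨x i, Submodule.subset_span (mem_range_self i)⟩)
    fun i j hij => hx (congr_arg Subtype.val hij)

end Gaussian

theorem multiquadric_interpolation_matrix_invertible_general {ι V : Type*} [Fintype ι]
    [DecidableEq ι] [NormedAddCommGroup V] [InnerProductSpace ℝ V] {x : ι → V}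
    (hx : Function.Injective x) {c p : ℝ} (hc : c ≠ 0) (hp : p ∈ Ioo 0 1) {A : Matrix ι ι ℝ}
    (hA : ∀ i j, A i j = ((‖x i - x j‖ / c) ^ 2 + 1) ^ p) : A.det ≠ 0 := by
  let S : Matrix ι ι ℝ := of fun i j => (‖x i - x j‖ / c) ^ 2 + 1
  have hS_nonneg (i j : ι) : 0 ≤ S i j := by
    simp only [S, of_apply]
    positivity
  have hAS : A = S.map fun s => s ^ p := Matrix.ext hA
  have hS (t : ℝ) (ht : t > 0) : (S.map fun s => Real.exp (-(t * s))).PosDef := by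
    have h_factor : (S.map fun s => Real.exp (-(t * s)))
        = Real.exp (-t) • of fun i j => Real.exp (-(t / c ^ 2) * ‖x i - x j‖ ^ 2) := by
      ext i j
      simp only [S, map_apply, of_apply, Matrix.smul_apply, smul_eq_mul, ← Real.exp_add]
      ring_nf
    rw [h_factor]
    exact (posDef_exp_neg_mul_sq_norm_sub (by positivity) hx).smul (Real.exp_pos _)
  have hA_neg : IsStrictCondNegDef A :=
    hAS ▸ isStrictCondNegDef_rpow_of_posDef_exp_neg_mul hS_nonneg hS hp
  exact hA_neg.det_ne_zero fun i => by simp [hA]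

/-- Micchelli's theorem for multiquadrics: for pairwise distinct points `x 1, …, x N` in `ℝ^d`
and shape parameter `c > 0`, the interpolation matrix with entries
`A i j = √((‖x i − x j‖ / c)² + 1)` is invertible, i.e. its determinant is nonzero. -/
theorem multiquadric_interpolation_matrix_invertible
    {d N : ℕ} (x : Fin N → EuclideanSpace ℝ (Fin d))
    (hx : Function.Injective x) (c : ℝ) (hc : 0 < c)
    (A : Matrix (Fin N) (Fin N) ℝ)
    (hA : ∀ i j, A i j = Real.sqrt ((‖x i - x j‖ / c) ^ 2 + 1)) :
    A.det ≠ 0 :=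
  multiquadric_interpolation_matrix_invertible_general hx hc.ne' (p := 1 / 2) (by norm_num)
    fun i j => (hA i j).trans (Real.sqrt_eq_rpow _)
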